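/- Let 0 < α < 1 and let μ be an α-Ahlfors regular Borel measure on ℝ with compact support E having at least two points. Let (I_j)_{j∈J} be the (at most countably many) connected components of the open set (inf E, sup E) \ E, with lengths |I_j|. Then for every R > 0 the sum S(R) = ∑_{j∈J} log(1 + e^{2R/(α+1)}·|I_j|) is finite and positive (for R large), and lim_{R→∞} (1/R)·log S(R) = 2α/(α+1). -/

import Mathlib

open MeasureTheory Metric Set Filter Real

/-!
Write `F(t) = ∑ log (1 + t |I_j|)` and `t = exp (2 R / (α + 1))`, so that the claim becomes
`log F(t) / log t → α`. Everything rests on counting `δ`-separated subsets of `E`: by the lower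
mass bound they have at most `M δ ^ (-α)` points (`card_separated_le`), and by the upper mass
bound a maximal one has at least `c δ ^ (-α)` points (`le_card_net`).

*Upper bound.* Each gap has its left endpoint in `E`, and the left endpoints of gaps of length
at least `δ` are `δ`-separated, so there are at most `M δ ^ (-α)` of them. Summing over dyadic
lengths, `∑ |I_j| ^ β < ∞` for every `β > α` (`summable_rpow_of_card_le`). For `β ≤ 1` the
inequality `log (1 + x) ≤ x ^ β / β` gives `F(t) ≤ C_β t ^ β`; the case `β = 1` also gives
the summability of the series defining `F`.

*Lower bound.* Let `S` be a maximal `δ`-separated subset of `E` with `δ = 1 / t`. The disjoint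
intervals `[x, x + δ)`, `x ∈ S`, have total length `|S| δ`. They are covered by `E`, which is
Lebesgue null because `α < 1` (`volume_eq_zero_of_card_separated_le`), by initial pieces of the
gaps of length `min |I_j| δ`, and by one interval of length `δ` to the right of `sup E`. Since
`min x 1 ≤ 2 log (1 + x)`, this gives `c t ^ α ≤ |S| ≤ 2 F(t) + 1`
(`card_separated_le_gap_sum`).

Hence `log F(t) / log t` is eventually squeezed between `α - o(1)` and `β + o(1)` for every
`β ∈ (α, 1]` (`tendsto_log_div_of_bounds`).
-/

/-- The topological support of a Borel measure on `ℝ`: the set of points all of whose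
open neighbourhoods have positive measure. -/
def measureSupport (μ : Measure ℝ) : Set ℝ :=
  {x | ∀ U : Set ℝ, IsOpen U → x ∈ U → 0 < μ U}

/-- A Borel measure on `ℝ` does not charge the complement of its topological support. -/
lemma measure_compl_measureSupport (μ : Measure ℝ) : μ (measureSupport μ)ᶜ = 0 := by
  refine measure_null_of_locally_null _ fun x hx => ?_
  simp only [measureSupport, mem_compl_iff, mem_ofPred_eq, not_forall] at hx
  obtain ⟨U, hU, hxU, h0⟩ := hx
  exact ⟨U, mem_nhdsWithin_of_mem_nhds (hU.mem_nhds hxU), by simpa using h0⟩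

/-- Packing bound: the balls of radius `δ / 3` around `δ`-separated points of `E` are disjoint,
and the total mass is finite, so there are at most `O(δ ^ (-α))` of them. -/
lemma card_separated_le {α K D : ℝ} (hK : 1 ≤ K) {μ : Measure ℝ} {E : Set ℝ}
    (hlow : ∀ x ∈ E, ∀ r : ℝ, 0 < r → r ≤ D →
      ENNReal.ofReal (K⁻¹ * r ^ α) ≤ μ (Metric.closedBall x r))
    (hD : 0 < D) (hmass : μ univ ≤ ENNReal.ofReal (K * D ^ α))
    {δ : ℝ} (hδ : 0 < δ) (hδD : δ ≤ D) (S : Finset ℝ) (hSE : (S : Set ℝ) ⊆ E)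
    (hS : ∀ x ∈ S, ∀ y ∈ S, x ≠ y → δ ≤ |x - y|) :
    (S.card : ℝ) ≤ K ^ 2 * D ^ α * 3 ^ α * δ ^ (-α) := by
  have hK0 : 0 < K := by linarith
  have hdisj : (S : Set ℝ).PairwiseDisjoint (fun x => Metric.closedBall x (δ / 3)) := by
    intro x hx y hy hxy
    refine Metric.closedBall_disjoint_closedBall ?_
    rw [Real.dist_eq]
    linarith [hS x hx y hy hxy]
  have h1 : (S.card : ENNReal) * ENNReal.ofReal (K⁻¹ * (δ / 3) ^ α)
      ≤ ENNReal.ofReal (K * D ^ α) := by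
    calc (S.card : ENNReal) * ENNReal.ofReal (K⁻¹ * (δ / 3) ^ α)
        = ∑ x ∈ S, ENNReal.ofReal (K⁻¹ * (δ / 3) ^ α) := by simp
      _ ≤ ∑ x ∈ S, μ (Metric.closedBall x (δ / 3)) :=
          Finset.sum_le_sum fun x hx => hlow x (hSE hx) _ (by positivity) (by linarith)
      _ = μ (⋃ x ∈ S, Metric.closedBall x (δ / 3)) :=
          (measure_biUnion_finset hdisj fun _ _ => Metric.isClosed_closedBall.measurableSet).symm
      _ ≤ μ univ := measure_mono (subset_univ _)
      _ ≤ _ := hmass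
  rw [← ENNReal.ofReal_natCast, ← ENNReal.ofReal_mul (by positivity),
    ENNReal.ofReal_le_ofReal_iff (by positivity), Real.div_rpow hδ.le (by norm_num)] at h1
  rw [Real.rpow_neg hδ.le]
  have h3 : (0:ℝ) < 3 ^ α := by positivity
  have hd : 0 < δ ^ α := by positivity
  have : (S.card : ℝ) = (S.card * (K⁻¹ * (δ ^ α / 3 ^ α))) * (K * 3 ^ α * (δ ^ α)⁻¹) := by
    field_simp
  rw [this]
  calc _ ≤ (K * D ^ α) * (K * 3 ^ α * (δ ^ α)⁻¹) := by gcongr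
    _ = _ := by ring

/-- If the cardinality of `δ`-separated finite subsets of `E` is bounded, then some such subset
is a `δ`-net of `E`: take one of maximal cardinality. -/
lemma exists_separated_net {E : Set ℝ} {δ M : ℝ} (hδ : 0 < δ)
    (hM : ∀ S : Finset ℝ, (S : Set ℝ) ⊆ E → (∀ x ∈ S, ∀ y ∈ S, x ≠ y → δ ≤ |x - y|) →
      (S.card : ℝ) ≤ M) :
    ∃ S : Finset ℝ, (S : Set ℝ) ⊆ E ∧ (∀ x ∈ S, ∀ y ∈ S, x ≠ y → δ ≤ |x - y|) ∧
      ∀ y ∈ E, ∃ x ∈ S, |y - x| < δ := by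
  classical
  let P : ℕ → Prop := fun n => ∃ S : Finset ℝ, (S : Set ℝ) ⊆ E ∧
    (∀ x ∈ S, ∀ y ∈ S, x ≠ y → δ ≤ |x - y|) ∧ S.card = n
  have hP0 : P 0 := ⟨∅, by simp, by simp, by simp⟩
  obtain ⟨S, hSE, hS, hc⟩ : P (Nat.findGreatest P ⌊M⌋₊) :=
    Nat.findGreatest_spec (m := 0) (Nat.zero_le _) hP0
  refine ⟨S, hSE, hS, fun y hy => ?_⟩
  by_contra! hfar
  have hyS : y ∉ S := fun h => by have := hfar y h; simp at this; linarith
  have hTE : ((insert y S : Finset ℝ) : Set ℝ) ⊆ E := by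
    rw [Finset.coe_insert]; exact insert_subset hy hSE
  have hT : ∀ u ∈ insert y S, ∀ v ∈ insert y S, u ≠ v → δ ≤ |u - v| := by
    intro u hu v hv huv
    rw [Finset.mem_insert] at hu hv
    rcases hu with rfl | hu <;> rcases hv with rfl | hv
    · exact absurd rfl huv
    · exact hfar v hv
    · rw [abs_sub_comm]; exact hfar u hu
    · exact hS u hu v hv huv
  have hle := Nat.le_findGreatest (P := P) (Nat.le_floor (hM _ hTE hT)) ⟨_, hTE, hT, rfl⟩
  rw [Finset.card_insert_of_notMem hyS] at hle
  omega

/-- A set with at most `O(δ ^ (-α))` `δ`-separated points, `α < 1`, is Lebesgue null. -/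
lemma volume_eq_zero_of_card_separated_le {E : Set ℝ} {α M D : ℝ} (hα1 : α < 1) (hD : 0 < D)
    (hM : ∀ δ : ℝ, 0 < δ → δ ≤ D → ∀ S : Finset ℝ, (S : Set ℝ) ⊆ E →
      (∀ x ∈ S, ∀ y ∈ S, x ≠ y → δ ≤ |x - y|) → (S.card : ℝ) ≤ M * δ ^ (-α)) :
    volume E = 0 := by
  have key : ∀ δ : ℝ, 0 < δ → δ ≤ D → volume E ≤ ENNReal.ofReal (2 * M * δ ^ (1 - α)) := by
    intro δ hδ hδD
    obtain ⟨S, hSE, hS, hnet⟩ := exists_separated_net hδ (hM δ hδ hδD)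
    have hcov : E ⊆ ⋃ x ∈ S, Metric.closedBall x δ := by
      intro y hy
      obtain ⟨x, hx, hxy⟩ := hnet y hy
      exact mem_biUnion hx (by rw [Metric.mem_closedBall, Real.dist_eq]; exact hxy.le)
    calc volume E ≤ ∑ x ∈ S, volume (Metric.closedBall x δ) :=
          (measure_mono hcov).trans (measure_biUnion_finset_le _ _)
      _ = ENNReal.ofReal (S.card * (2 * δ)) := by
          rw [ENNReal.ofReal_mul (by positivity)]; simp [Real.volume_closedBall]
      _ ≤ _ := by
          refine ENNReal.ofReal_le_ofReal ?_
          have := hM δ hδ hδD S hSE hS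
          calc (S.card : ℝ) * (2 * δ) ≤ (M * δ ^ (-α)) * (2 * δ) := by gcongr
            _ = 2 * M * (δ ^ (-α) * δ ^ (1:ℝ)) := by rw [Real.rpow_one]; ring
            _ = _ := by rw [← Real.rpow_add hδ]; ring_nf
  have hlim : Tendsto (fun δ : ℝ => ENNReal.ofReal (2 * M * δ ^ (1 - α)))
      (nhdsWithin 0 (Ioi 0)) (nhds 0) := by
    have h1 : Tendsto (fun δ : ℝ => 2 * M * δ ^ (1 - α)) (nhds 0) (nhds (2 * M * 0 ^ (1 - α))) :=
      ((Real.continuousAt_rpow_const 0 (1 - α) (Or.inr (by linarith))).tendsto).const_mul _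
    rw [Real.zero_rpow (by linarith), mul_zero] at h1
    simpa using (ENNReal.tendsto_ofReal h1).mono_left nhdsWithin_le_nhds
  refine le_antisymm (ge_of_tendsto hlim ?_) bot_le
  filter_upwards [Ioc_mem_nhdsGT hD] with δ hδ using key δ hδ.1 hδ.2

/-- The components of `(inf E, sup E) \ E` are open intervals with both endpoints in `E`. -/
lemma component_eq_Ioo {E : Set ℝ} (hEc : IsCompact E) (hE0 : E.Nonempty) {x : ℝ}
    (hx : x ∈ Ioo (sInf E) (sSup E) \ E) :
    ∃ p q : ℝ, p < q ∧ p ∈ E ∧ q ∈ E ∧ x ∈ Ioo p q ∧ (∀ y ∈ Ioo p q, y ∉ E) ∧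
      connectedComponentIn (Ioo (sInf E) (sSup E) \ E) x = Ioo p q := by
  have ha := hEc.sInf_mem hE0
  have hb := hEc.sSup_mem hE0
  have hL : IsCompact (E ∩ Iic x) := hEc.inter_right isClosed_Iic
  have hR : IsCompact (E ∩ Ici x) := hEc.inter_right isClosed_Ici
  have hp := hL.sSup_mem ⟨_, ha, hx.1.1.le⟩
  have hq := hR.sInf_mem ⟨_, hb, hx.1.2.le⟩
  set p := sSup (E ∩ Iic x) with hpdef
  set q := sInf (E ∩ Ici x) with hqdef
  have hpx : p < x := lt_of_le_of_ne hp.2 fun h => hx.2 (h ▸ hp.1)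
  have hxq : x < q := lt_of_le_of_ne hq.2 fun h => hx.2 (h ▸ hq.1)
  have hgap : ∀ y ∈ Ioo p q, y ∉ E := by
    intro y hy hyE
    rcases le_total y x with h | h
    · exact absurd (le_csSup hL.bddAbove ⟨hyE, h⟩) (not_le.2 hy.1)
    · exact absurd (csInf_le hR.bddBelow ⟨hyE, h⟩) (not_le.2 hy.2)
  refine ⟨p, q, hpx.trans hxq, hp.1, hq.1, ⟨hpx, hxq⟩, hgap, Subset.antisymm ?_ ?_⟩
  · intro y hy
    have hoc := (isPreconnected_connectedComponentIn
      (F := Ioo (sInf E) (sSup E) \ E) (x := x)).ordConnected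
    have hxm := mem_connectedComponentIn hx
    constructor
    · by_contra! h
      exact (connectedComponentIn_subset _ _ (hoc.out hy hxm ⟨h, hpx.le⟩)).2 hp.1
    · by_contra! h
      exact (connectedComponentIn_subset _ _ (hoc.out hxm hy ⟨hxq.le, h⟩)).2 hq.1
  · refine isPreconnected_Ioo.subset_connectedComponentIn ⟨hpx, hxq⟩ fun y hy => ⟨⟨?_, ?_⟩, hgap y hy⟩
    · exact (csInf_le hEc.bddBelow hp.1).trans_lt hy.1
    · exact hy.2.trans_le (le_csSup hEc.bddAbove hq.1)

lemma log_one_add_le_rpow {β x : ℝ} (hβ : 0 < β) (hβ1 : β ≤ 1) (hx : 0 ≤ x) :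
    Real.log (1 + x) ≤ x ^ β / β := by
  have h1 : (1 + x) ^ β ≤ 1 + x ^ β := by
    simpa using Real.rpow_add_le_add_rpow (zero_le_one) hx hβ.le hβ1
  have h2 : β * Real.log (1 + x) ≤ x ^ β := by
    rw [← Real.log_rpow (by linarith)]
    linarith [Real.log_le_sub_one_of_pos (show 0 < (1 + x) ^ β by positivity)]
  rw [le_div_iff₀ hβ]; linarith

lemma min_one_le_two_mul_log {x : ℝ} (hx : 0 ≤ x) : min x 1 ≤ 2 * Real.log (1 + x) := by
  have h1 := Real.one_sub_inv_le_log_of_pos (show 0 < 1 + x by linarith)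
  have h2 : 1 - (1 + x)⁻¹ = x / (1 + x) := by field_simp; ring
  have h3 : min x 1 / 2 ≤ x / (1 + x) := by
    rw [div_le_div_iff₀ (by norm_num) (by linarith)]
    rcases le_total x 1 with h | h
    · rw [min_eq_left h]; nlinarith
    · rw [min_eq_right h]; linarith
  linarith

lemma gap_left_injective {ι : Type*} {E : Set ℝ} {p q : ι → ℝ} (hpq : ∀ i, p i < q i)
    (hqE : ∀ i, q i ∈ E) (hgap : ∀ i, ∀ y ∈ Ioo (p i) (q i), y ∉ E)
    (hinj : ∀ i j, p i = p j → q i = q j → i = j) : Function.Injective p := by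
  intro i j hij
  refine hinj i j hij ?_
  rcases lt_trichotomy (q i) (q j) with h | h | h
  · exact absurd (hqE i) (hgap j _ ⟨hij ▸ hpq i, h⟩)
  · exact h
  · exact absurd (hqE j) (hgap i _ ⟨hij ▸ hpq j, h⟩)

/-- The left endpoints of gaps of length at least `δ` form a `δ`-separated subset of `E`, so
the packing bound also bounds the number of such gaps. -/
lemma card_gaps_le {ι : Type*} {E : Set ℝ} {p q : ι → ℝ} {α M δ : ℝ}
    (hM : ∀ S : Finset ℝ, (S : Set ℝ) ⊆ E →
      (∀ x ∈ S, ∀ y ∈ S, x ≠ y → δ ≤ |x - y|) → (S.card : ℝ) ≤ M * δ ^ (-α))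
    (hpE : ∀ i, p i ∈ E) (hgap : ∀ i, ∀ y ∈ Ioo (p i) (q i), y ∉ E)
    (hp : Function.Injective p) (s : Finset ι) (hs : ∀ i ∈ s, δ ≤ q i - p i) :
    (s.card : ℝ) ≤ M * δ ^ (-α) := by
  classical
  have hlt : ∀ i ∈ s, ∀ j, p i < p j → δ ≤ p j - p i := by
    intro i hi j hij
    have : q i ≤ p j := by
      by_contra! h
      exact hgap i _ ⟨hij, h⟩ (hpE j)
    linarith [hs i hi]
  rw [← Finset.card_image_of_injective s hp]
  refine hM _ ?_ ?_
  · intro x hx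
    obtain ⟨i, -, rfl⟩ := Finset.mem_image.1 (Finset.mem_coe.1 hx)
    exact hpE i
  · intro x hx y hy hxy
    obtain ⟨i, hi, rfl⟩ := Finset.mem_image.1 hx
    obtain ⟨j, hj, rfl⟩ := Finset.mem_image.1 hy
    rcases lt_or_gt_of_ne hxy with h | h
    · rw [abs_sub_comm]; exact (hlt i hi j h).trans (le_abs_self _)
    · exact (hlt j hj i h).trans (le_abs_self _)

/-- If for every `δ` at most `O(δ ^ (-α))` terms of `l` are `≥ δ`, then `∑ l ^ β` converges
for all `β > α`: group the terms by dyadic size and compare with a geometric series. -/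
lemma summable_rpow_of_card_le {ι : Type*} {l : ι → ℝ} {α β M D : ℝ} (hαβ : α < β)
    (hβ : 0 < β) (hM0 : 0 ≤ M) (hD : 0 < D) (hl0 : ∀ i, 0 < l i) (hlD : ∀ i, l i ≤ D)
    (hcard : ∀ δ : ℝ, 0 < δ → δ ≤ D → ∀ s : Finset ι, (∀ i ∈ s, δ ≤ l i) →
      (s.card : ℝ) ≤ M * δ ^ (-α)) :
    Summable (fun i => l i ^ β) := by
  classical
  have hk : ∀ i, ∃ n : ℕ, (1 / 2 : ℝ) ^ (n + 1) < l i / D ∧ l i / D ≤ (1 / 2) ^ n := fun i =>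
    exists_nat_pow_near_of_lt_one (div_pos (hl0 i) hD) ((div_le_one hD).2 (hlD i))
      (by norm_num) (by norm_num)
  choose k hk1 hk2 using hk
  set r : ℝ := (1 / 2) ^ (β - α) with hr
  have hr0 : 0 ≤ r := by positivity
  have hr1 : r < 1 := Real.rpow_lt_one (by norm_num) (by norm_num) (by linarith)
  set C : ℝ := M * (D / 2) ^ (-α) * D ^ β with hC
  have hterm : ∀ n : ℕ, M * (D * (1 / 2) ^ (n + 1)) ^ (-α) * (D * (1 / 2) ^ n) ^ β = C * r ^ n := by
    intro n
    have hpow : ∀ γ : ℝ, ((1 / 2 : ℝ) ^ n) ^ γ = ((1 / 2 : ℝ) ^ γ) ^ n := fun γ => by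
      rw [← Real.rpow_natCast, ← Real.rpow_natCast, ← Real.rpow_mul (by norm_num),
        ← Real.rpow_mul (by norm_num), mul_comm]
    have e1 : D * (1 / 2 : ℝ) ^ (n + 1) = (D / 2) * (1 / 2) ^ n := by ring
    rw [e1, Real.mul_rpow (by positivity) (by positivity),
      Real.mul_rpow (by positivity) (by positivity), hpow, hpow, hC, hr,
      sub_eq_neg_add, Real.rpow_add (by norm_num), mul_pow]
    ring
  refine summable_of_sum_le (c := C * (1 - r)⁻¹) (fun i => by have := hl0 i; positivity)
    fun s => ?_
  calc ∑ i ∈ s, l i ^ β ≤ ∑ i ∈ s, (D * (1 / 2) ^ k i) ^ β := by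
        refine Finset.sum_le_sum fun i _ => Real.rpow_le_rpow (hl0 i).le ?_ hβ.le
        have := hk2 i
        rw [div_le_iff₀ hD] at this
        linarith
    _ = ∑ n ∈ s.image k, (s.filter fun i => k i = n).card • (D * (1 / 2) ^ n) ^ β :=
        Finset.sum_comp (fun n : ℕ => (D * (1 / 2 : ℝ) ^ n) ^ β) k
    _ ≤ ∑ n ∈ s.image k, C * r ^ n := by
        refine Finset.sum_le_sum fun n _ => ?_
        rw [← hterm n, nsmul_eq_mul]
        refine mul_le_mul_of_nonneg_right (hcard _ (by positivity) ?_ _ ?_) (by positivity)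
        · exact mul_le_of_le_one_right hD.le (pow_le_one₀ (by norm_num) (by norm_num))
        · intro i hi
          have h := hk1 i
          rw [(Finset.mem_filter.1 hi).2, lt_div_iff₀ hD] at h
          linarith
    _ ≤ C * (1 - r)⁻¹ :=
        sum_le_hasSum _ (fun n _ => by positivity)
          ((hasSum_geometric_of_lt_one hr0 hr1).mul_left C)

/-- Lower bound for the gap sum in terms of a separated set `S`. The intervals `[x, x + δ)`,
`x ∈ S`, are disjoint, and their union is covered by `E` (a null set), the interval
`[b, b + δ)`, and the initial segments of length `min |I| δ` of the gaps `I`. -/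
lemma card_separated_le_gap_sum {ι : Type*} {E : Set ℝ} {p q : ι → ℝ} {a b δ : ℝ}
    (hvol : volume E = 0) (hδ : 0 < δ) (ha : ∀ x ∈ E, a ≤ x) (haE : a ∈ E)
    (hb : ∀ x ∈ E, x ≤ b)
    (hpq : ∀ i, p i < q i) (hgap : ∀ i, ∀ y ∈ Ioo (p i) (q i), y ∉ E)
    (hcov : ∀ y ∈ Ioo a b, y ∉ E → ∃ i, y ∈ Ioo (p i) (q i))
    (hsum : Summable fun i => Real.log (1 + δ⁻¹ * (q i - p i)))
    (S : Finset ℝ) (hSE : (S : Set ℝ) ⊆ E)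
    (hS : ∀ x ∈ S, ∀ y ∈ S, x ≠ y → δ ≤ |x - y|) :
    (S.card : ℝ) ≤ 2 * ∑' i, Real.log (1 + δ⁻¹ * (q i - p i)) + 1 := by
  have hlpos : ∀ i, 0 < Real.log (1 + δ⁻¹ * (q i - p i)) := fun i => by
    have : 0 < δ⁻¹ * (q i - p i) := mul_pos (inv_pos.2 hδ) (sub_pos.2 (hpq i))
    exact Real.log_pos (by linarith)
  have : Countable ι := by
    have h := hsum.countable_support
    rw [Function.support_eq_univ fun i => (hlpos i).ne'] at h
    exact countable_univ_iff.1 h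
  have hdisj : (S : Set ℝ).PairwiseDisjoint (fun x => Ico x (x + δ)) := by
    intro x hx y hy hxy
    refine Set.disjoint_left.2 fun z hz hz' => ?_
    have := hS x hx y hy hxy
    rcases le_abs.1 this with h | h
    · linarith [hz.1, hz'.2]
    · linarith [hz.2, hz'.1]
  have hsub : (⋃ x ∈ S, Ico x (x + δ)) ⊆
      (E ∪ ⋃ i, Ioo (p i) (min (q i) (p i + δ))) ∪ Ico b (b + δ) := by
    intro y hy
    simp only [mem_iUnion, exists_prop] at hy
    obtain ⟨x, hxS, hxy⟩ := hy
    have hxE := hSE hxS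
    by_cases hyE : y ∈ E
    · exact Or.inl (Or.inl hyE)
    rcases le_or_gt b y with hby | hyb
    · exact Or.inr ⟨hby, by linarith [hb x hxE, hxy.2]⟩
    · have hay : a < y := lt_of_le_of_ne ((ha x hxE).trans hxy.1) fun h => hyE (h ▸ haE)
      obtain ⟨i, hi⟩ := hcov y ⟨hay, hyb⟩ hyE
      have hxp : x ≤ p i := by
        by_contra! h
        exact hgap i x ⟨h, hxy.1.trans_lt hi.2⟩ hxE
      exact Or.inl (Or.inr (mem_iUnion.2 ⟨i, hi.1, lt_min hi.2 (by linarith [hxy.2])⟩))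
  have hlen : ∀ i, min (q i) (p i + δ) - p i ≤ 2 * δ * Real.log (1 + δ⁻¹ * (q i - p i)) := by
    intro i
    have hx : 0 ≤ δ⁻¹ * (q i - p i) := (mul_pos (inv_pos.2 hδ) (sub_pos.2 (hpq i))).le
    have h := mul_le_mul_of_nonneg_left (min_one_le_two_mul_log hx) hδ.le
    rw [mul_min_of_nonneg _ _ hδ.le, mul_inv_cancel_left₀ hδ.ne', mul_one] at h
    calc _ = min (q i - p i) δ := by rw [← min_sub_sub_right]; simp
      _ ≤ _ := by linarith
  have hmain : ENNReal.ofReal (S.card * δ) ≤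
      ENNReal.ofReal (∑' i, 2 * δ * Real.log (1 + δ⁻¹ * (q i - p i))) + ENNReal.ofReal δ := by
    calc ENNReal.ofReal (S.card * δ) = ∑ x ∈ S, volume (Ico x (x + δ)) := by
          rw [ENNReal.ofReal_mul (by positivity)]; simp [Real.volume_Ico]
      _ = volume (⋃ x ∈ S, Ico x (x + δ)) :=
          (measure_biUnion_finset hdisj fun _ _ => measurableSet_Ico).symm
      _ ≤ volume E + ∑' i, volume (Ioo (p i) (min (q i) (p i + δ))) + volume (Ico b (b + δ)) := by
          refine (measure_mono hsub).trans ((measure_union_le _ _).trans ?_)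
          gcongr
          refine (measure_union_le _ _).trans ?_
          gcongr
          exact measure_iUnion_le _
      _ ≤ _ := by
          rw [hvol, zero_add, ENNReal.ofReal_tsum_of_nonneg
            (fun i => by have := hlpos i; positivity) (hsum.mul_left _)]
          gcongr with i
          · rw [Real.volume_Ioo]; exact ENNReal.ofReal_le_ofReal (hlen i)
          · simp [Real.volume_Ico]
  have hnn : 0 ≤ ∑' i, 2 * δ * Real.log (1 + δ⁻¹ * (q i - p i)) :=
    tsum_nonneg fun i => by have := hlpos i; positivity
  rw [← ENNReal.ofReal_add hnn hδ.le, ENNReal.ofReal_le_ofReal_iff (by positivity),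
    tsum_mul_left] at hmain
  refine le_of_mul_le_mul_right (hmain.trans_eq ?_) hδ
  ring

/-- If `c t ^ α ≤ F t` for large `t` and `F t = O(t ^ β)` for every `β ∈ (α, 1]`, then
`log F(t) / log t → α`; here written with `t = exp (2 R / (α + 1))`. -/
lemma tendsto_log_div_of_bounds {α c : ℝ} (hα0 : 0 < α) (hα1 : α < 1) (hc : 0 < c) {F : ℝ → ℝ}
    (hlow : ∀ᶠ t in atTop, c * t ^ α ≤ F t)
    (hup : ∀ β, α < β → β ≤ 1 → ∃ C, 0 < C ∧ ∀ t, 0 < t → F t ≤ C * t ^ β) :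
    Tendsto (fun R : ℝ => (1 / R) * Real.log (F (Real.exp (2 * R / (α + 1))))) atTop
      (nhds (2 * α / (α + 1))) := by
  have hα : 0 < α + 1 := by linarith
  have ht : Tendsto (fun R : ℝ => Real.exp (2 * R / (α + 1))) atTop atTop :=
    Real.tendsto_exp_atTop.comp ((tendsto_id.const_mul_atTop two_pos).atTop_div_const hα)
  have hlog : ∀ C γ R : ℝ, 0 < C → 0 < R →
      (1 / R) * Real.log (C * Real.exp (2 * R / (α + 1)) ^ γ) =
        Real.log C * R⁻¹ + 2 * γ / (α + 1) := by
    intro C γ R hC hR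
    rw [Real.log_mul hC.ne' (by positivity), Real.log_rpow (Real.exp_pos _), Real.log_exp]
    field_simp
  have hconst : ∀ C γ : ℝ, Tendsto (fun R : ℝ => Real.log C * R⁻¹ + 2 * γ / (α + 1)) atTop
      (nhds (2 * γ / (α + 1))) := by
    intro C γ
    simpa using (tendsto_inv_atTop_zero.const_mul (Real.log C)).add_const (2 * γ / (α + 1))
  have hlowR := ht.eventually hlow
  rw [tendsto_order]
  constructor
  · intro u hu
    filter_upwards [hlowR, eventually_gt_atTop 0, (hconst c α).eventually_const_lt hu]
      with R hR hR0 h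
    rw [← hlog c α R hc hR0] at h
    refine h.trans_le (mul_le_mul_of_nonneg_left (Real.log_le_log (by positivity) hR)
      (by positivity))
  · intro u hu
    obtain ⟨β, hβ1, hβ2⟩ : ∃ β, α < β ∧ β < min 1 (u * (α + 1) / 2) := by
      refine exists_between (lt_min hα1 ?_)
      rw [gt_iff_lt, div_lt_iff₀ hα] at hu
      linarith
    have hβu : 2 * β / (α + 1) < u := by
      have := hβ2.trans_le (min_le_right _ _)
      rw [div_lt_iff₀ hα]; linarith
    obtain ⟨C, hC, hF⟩ := hup β hβ1 (hβ2.le.trans (min_le_left _ _))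
    filter_upwards [hlowR, eventually_gt_atTop 0, (hconst C β).eventually_lt_const hβu]
      with R hR hR0 h
    rw [← hlog C β R hC hR0] at h
    refine lt_of_le_of_lt (mul_le_mul_of_nonneg_left
      (Real.log_le_log (lt_of_lt_of_le (by positivity) hR) (hF _ (Real.exp_pos _)))
      (by positivity)) h

/-- A `δ`-net of `E` has at least `c δ ^ (-α)` points, since each ball of radius `δ` carries mass
at most `K δ ^ α`. -/
lemma le_card_net {α K D δ : ℝ} (hK : 1 ≤ K) {μ : Measure ℝ} {E : Set ℝ} (hδ : 0 < δ)
    (hup : ∀ x ∈ E, μ (Metric.closedBall x δ) ≤ ENNReal.ofReal (K * δ ^ α))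
    (hE : ENNReal.ofReal (K⁻¹ * D ^ α) ≤ μ E) (S : Finset ℝ) (hSE : (S : Set ℝ) ⊆ E)
    (hnet : ∀ y ∈ E, ∃ x ∈ S, |y - x| < δ) :
    D ^ α / K ^ 2 * δ⁻¹ ^ α ≤ S.card := by
  have hK0 : 0 < K := by linarith
  have hcov : E ⊆ ⋃ x ∈ S, Metric.closedBall x δ := by
    intro y hy
    obtain ⟨x, hx, hxy⟩ := hnet y hy
    exact mem_biUnion hx (by rw [Metric.mem_closedBall, Real.dist_eq]; exact hxy.le)
  have h : ENNReal.ofReal (K⁻¹ * D ^ α) ≤ ENNReal.ofReal (S.card * (K * δ ^ α)) := by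
    calc _ ≤ μ E := hE
      _ ≤ ∑ x ∈ S, μ (Metric.closedBall x δ) :=
          (measure_mono hcov).trans (measure_biUnion_finset_le _ _)
      _ ≤ ∑ x ∈ S, ENNReal.ofReal (K * δ ^ α) := Finset.sum_le_sum fun x hx => hup x (hSE hx)
      _ = _ := by rw [ENNReal.ofReal_mul (Nat.cast_nonneg _)]; simp only [Finset.sum_const, nsmul_eq_mul,
        ENNReal.ofReal_natCast]
  rw [ENNReal.ofReal_le_ofReal_iff (by positivity)] at h
  have hd : 0 < δ ^ α := by positivity
  rw [Real.inv_rpow hδ.le]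
  calc D ^ α / K ^ 2 * (δ ^ α)⁻¹ = (K⁻¹ * D ^ α) * (K⁻¹ * (δ ^ α)⁻¹) := by field_simp
    _ ≤ (S.card * (K * δ ^ α)) * (K⁻¹ * (δ ^ α)⁻¹) := by gcongr
    _ = S.card := by field_simp

/-- **Gap-sum asymptotic for Ahlfors regular measures: entropy `2α/(α+1)`.**
Let `0 < α < 1` and let `μ` be an `α`-Ahlfors regular measure with compact nontrivial
support `E`.  Let the `I_j` (`j ∈ J`) be the connected components of
`(inf E, sup E) \ E`, with lengths `|I_j|`.  Then for every `R > 0` the sum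
`S(R) = ∑_j log(1 + e^{2R/(α+1)} |I_j|)` is finite, it is positive for `R` large, and
`(1/R) log S(R) → 2α/(α+1)` as `R → ∞`. -/
theorem gap_sum_entropy
    (α : ℝ) (hα0 : 0 < α) (hα1 : α < 1)
    (μ : Measure ℝ) (E : Set ℝ) (hE : E = measureSupport μ)
    (hEc : IsCompact E) (hEnt : E.Nontrivial)
    (K : ℝ) (hK : 1 ≤ K)
    (hreg : ∀ x ∈ E, ∀ r : ℝ, 0 < r → r ≤ Metric.diam E →
      ENNReal.ofReal (K⁻¹ * r ^ α) ≤ μ (Metric.closedBall x r) ∧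
      μ (Metric.closedBall x r) ≤ ENNReal.ofReal (K * r ^ α))
    (G : Set ℝ) (hG : G = Set.Ioo (sInf E) (sSup E) \ E)
    (comps : Set (Set ℝ))
    (hcomps : comps = {C : Set ℝ | ∃ x ∈ G, C = connectedComponentIn G x}) :
    (∀ R : ℝ, 0 < R →
      Summable (fun C : comps =>
        Real.log (1 + Real.exp (2 * R / (α + 1)) * Metric.diam (C : Set ℝ)))) ∧
    (∀ᶠ R : ℝ in Filter.atTop,
      0 < ∑' C : comps,
        Real.log (1 + Real.exp (2 * R / (α + 1)) * Metric.diam (C : Set ℝ))) ∧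
    Filter.Tendsto
      (fun R : ℝ =>
        (1 / R) *
          Real.log (∑' C : comps,
            Real.log (1 + Real.exp (2 * R / (α + 1)) * Metric.diam (C : Set ℝ))))
      Filter.atTop (nhds (2 * α / (α + 1))) := by
  have hne : E.Nonempty := hEnt.nonempty
  have hD : 0 < Metric.diam E := by
    obtain ⟨x, hx, y, hy, hxy⟩ := hEnt
    exact (dist_pos.2 hxy).trans_le (Metric.dist_le_diam_of_mem hEc.isBounded hx hy)
  have hlowball := fun x hx r h1 h2 => (hreg x hx r h1 h2).1
  have hupball := fun x hx r h1 h2 => (hreg x hx r h1 h2).2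
  set D := Metric.diam E with hDdef
  have hK0 : 0 < K := by linarith
  -- The total mass is `μ E`, and it lies between `K⁻¹ D ^ α` and `K D ^ α`.
  have hunivE : μ univ ≤ μ E := by
    calc μ univ = μ (E ∪ Eᶜ) := by rw [union_compl_self]
      _ ≤ μ E + μ Eᶜ := measure_union_le _ _
      _ = μ E := by rw [hE, measure_compl_measureSupport, add_zero]
  obtain ⟨x₀, hx₀⟩ := hne
  have hmass : μ univ ≤ ENNReal.ofReal (K * D ^ α) := by
    refine hunivE.trans ((measure_mono fun y hy => ?_).trans (hupball x₀ hx₀ D hD le_rfl))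
    exact Metric.dist_le_diam_of_mem hEc.isBounded hy hx₀
  have hmassE : ENNReal.ofReal (K⁻¹ * D ^ α) ≤ μ E :=
    (hlowball x₀ hx₀ D hD le_rfl).trans ((measure_mono (subset_univ _)).trans hunivE)
  set M : ℝ := K ^ 2 * D ^ α * 3 ^ α with hMdef
  have hM0 : 0 ≤ M := by positivity
  have hM : ∀ δ : ℝ, 0 < δ → δ ≤ D → ∀ S : Finset ℝ, (S : Set ℝ) ⊆ E →
      (∀ x ∈ S, ∀ y ∈ S, x ≠ y → δ ≤ |x - y|) → (S.card : ℝ) ≤ M * δ ^ (-α) :=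
    fun δ h1 h2 S h3 h4 => card_separated_le hK hlowball hD hmass h1 h2 S h3 h4
  have hvol : volume E = 0 := volume_eq_zero_of_card_separated_le hα1 hD hM
  have hcomp : ∀ C : comps, ∃ p q : ℝ, p < q ∧ p ∈ E ∧ q ∈ E ∧ (∀ y ∈ Ioo p q, y ∉ E) ∧
      (C : Set ℝ) = Ioo p q := by
    rintro ⟨C, hC⟩
    rw [hcomps] at hC
    obtain ⟨x, hx, rfl⟩ := hC
    rw [hG] at hx
    obtain ⟨p, q, h1, h2, h3, -, h4, h5⟩ := component_eq_Ioo hEc ⟨x₀, hx₀⟩ hx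
    exact ⟨p, q, h1, h2, h3, h4, (congrArg (connectedComponentIn · x) hG).trans h5⟩
  choose p q hpq hpE hqE hgap hCeq using hcomp
  have hdiam : ∀ C : comps, Metric.diam (C : Set ℝ) = q C - p C := fun C => by
    rw [hCeq C, Real.diam_Ioo (hpq C).le]
  simp only [hdiam]
  have hinj : ∀ C C' : comps, p C = p C' → q C = q C' → C = C' := fun C C' h1 h2 =>
    Subtype.ext (by rw [hCeq C, hCeq C', h1, h2])
  have hcov : ∀ y ∈ Ioo (sInf E) (sSup E), y ∉ E → ∃ C : comps, y ∈ Ioo (p C) (q C) := by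
    intro y hy hyE
    have hyG : y ∈ G := by rw [hG]; exact ⟨hy, hyE⟩
    refine ⟨⟨connectedComponentIn G y, by rw [hcomps]; exact ⟨y, hyG, rfl⟩⟩, ?_⟩
    rw [← hCeq]
    exact mem_connectedComponentIn hyG
  have hp := gap_left_injective hpq hqE hgap hinj
  have hl0 : ∀ C, 0 < q C - p C := fun C => sub_pos.2 (hpq C)
  have hlD : ∀ C, q C - p C ≤ D := fun C =>
    (le_abs_self _).trans (Metric.dist_le_diam_of_mem hEc.isBounded (hqE C) (hpE C))
  have hrpow : ∀ β, α < β → Summable fun C => (q C - p C) ^ β := fun β hβ =>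
    summable_rpow_of_card_le hβ (hα0.trans hβ) hM0 hD hl0 hlD fun δ h1 h2 s hs =>
      card_gaps_le (hM δ h1 h2) hpE hgap hp s hs
  have hterm : ∀ β, α < β → β ≤ 1 → ∀ t : ℝ, 0 < t → ∀ C,
      Real.log (1 + t * (q C - p C)) ≤ t ^ β / β * (q C - p C) ^ β := by
    intro β hβ hβ1 t ht C
    refine (log_one_add_le_rpow (hα0.trans hβ) hβ1 (mul_pos ht (hl0 C)).le).trans_eq ?_
    rw [Real.mul_rpow ht.le (hl0 C).le]
    ring
  have hsum : ∀ t : ℝ, 0 < t → Summable fun C => Real.log (1 + t * (q C - p C)) := fun t ht =>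
    Summable.of_nonneg_of_le
      (fun C => Real.log_nonneg (by linarith [mul_pos ht (hl0 C)]))
      (hterm 1 hα1 le_rfl t ht) ((hrpow 1 hα1).mul_left _)
  set F : ℝ → ℝ := fun t => ∑' C, Real.log (1 + t * (q C - p C)) with hF
  set c : ℝ := D ^ α / K ^ 2 with hc
  have hc0 : 0 < c := by positivity
  have hlow : ∀ᶠ t in atTop, c / 4 * t ^ α ≤ F t := by
    filter_upwards [eventually_ge_atTop D⁻¹,
      ((tendsto_rpow_atTop hα0).const_mul_atTop hc0).eventually_ge_atTop 2] with t ht ht2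
    have ht0 : 0 < t := (inv_pos.2 hD).trans_le ht
    have hδ : 0 < t⁻¹ := inv_pos.2 ht0
    have hδD : t⁻¹ ≤ D := inv_le_of_inv_le₀ hD ht
    obtain ⟨S, hSE, hS, hnet⟩ := exists_separated_net hδ (hM _ hδ hδD)
    have h1 := le_card_net hK hδ (fun x hx => hupball x hx _ hδ hδD) hmassE S hSE hnet
    have h2 := card_separated_le_gap_sum hvol hδ (fun x hx => csInf_le hEc.bddBelow hx)
      (hEc.sInf_mem ⟨x₀, hx₀⟩) (fun x hx => le_csSup hEc.bddAbove hx) hpq hgap hcov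
      (by rw [inv_inv]; exact hsum t ht0) S hSE hS
    rw [inv_inv] at h1 h2
    have h3 : c * t ^ α ≤ 2 * F t + 1 := h1.trans h2
    linarith
  have hup : ∀ β, α < β → β ≤ 1 → ∃ C, 0 < C ∧ ∀ t, 0 < t → F t ≤ C * t ^ β := by
    intro β hβ hβ1
    have hβ0 : 0 < β := hα0.trans hβ
    have hnn : 0 ≤ ∑' C, (q C - p C) ^ β := tsum_nonneg fun C => by have := hl0 C; positivity
    refine ⟨(∑' C, (q C - p C) ^ β) / β + 1, by positivity, fun t ht => ?_⟩
    have h := (hsum t ht).tsum_le_tsum (hterm β hβ hβ1 t ht) ((hrpow β hβ).mul_left _)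
    rw [tsum_mul_left] at h
    have h' : 0 < t ^ β := by positivity
    calc F t ≤ t ^ β / β * ∑' C, (q C - p C) ^ β := h
      _ = (∑' C, (q C - p C) ^ β) / β * t ^ β := by ring
      _ ≤ _ := by gcongr; linarith
  refine ⟨fun R _ => hsum _ (Real.exp_pos _), ?_,
    tendsto_log_div_of_bounds hα0 hα1 (by positivity : 0 < c / 4) hlow hup⟩
  have ht : Tendsto (fun R : ℝ => Real.exp (2 * R / (α + 1))) atTop atTop :=
    Real.tendsto_exp_atTop.comp
      ((tendsto_id.const_mul_atTop two_pos).atTop_div_const (by linarith))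
  filter_upwards [ht.eventually hlow] with R hR
  exact lt_of_lt_of_le (by positivity) hR
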